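/- arXiv:2307.01127 — 7 statements merged into one kernel-verified Lean document; each statement's English description precedes it below -/
import Mathlib

section
/- For every δ with 0 < δ < e^{-3/2}, the function F₁ is an N-function: F₁ is continuous on ℝ, convex on ℝ, even, nonnegative, F₁(s) = 0 if and only if s = 0, lim_{t→0} F₁(t)/t = 0, and lim_{t→+∞} F₁(t)/t = +∞. -/
open Filter Topology

noncomputable def F1 (δ s : ℝ) : ℝ :=
  if |s| < δ then -(1/2) * s^2 * Real.log (s^2)
  else -(1/2) * s^2 * (Real.log (δ^2) + 3) + 2*δ*|s| - (1/2)*δ^2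

lemma F1_lt {δ s : ℝ} (h : |s| < δ) : F1 δ s = -(s * (s * Real.log s)) := by
  unfold F1
  rw [if_pos h, Real.log_pow]
  push_cast
  ring

lemma F1_ge {δ s : ℝ} (h : δ ≤ |s|) :
    F1 δ s = -s^2 * (Real.log δ + 3/2) + 2*δ*|s| - (1/2)*δ^2 := by
  unfold F1
  rw [if_neg (not_lt.mpr h), Real.log_pow]
  push_cast
  ring

lemma F1_le {δ s : ℝ} (hδ : 0 < δ) (h : |s| ≤ δ) : F1 δ s = -(s * (s * Real.log s)) := by
  rcases h.lt_or_eq with h | h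
  · exact F1_lt h
  · rw [F1_ge h.ge, ← Real.log_abs s, h]
    have : s^2 = δ^2 := by rw [← sq_abs, h]
    have h2 : s * (s * Real.log δ) = s^2 * Real.log δ := by ring
    rw [h2, this]
    ring

lemma F1_cont {δ : ℝ} (hδ : 0 < δ) : Continuous (F1 δ) := by
  have e : F1 δ = fun s => if |s| ≤ δ then -(s * (s * Real.log s)) else
      -s^2 * (Real.log δ + 3/2) + 2*δ*|s| - (1/2)*δ^2 := by
    funext s
    split_ifs with h
    · exact F1_le hδ h
    · exact F1_ge (not_le.mp h).le
  rw [e]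
  refine Continuous.if_le ?_ ?_ continuous_abs continuous_const ?_
  · exact (continuous_id.mul Real.continuous_mul_log).neg
  · fun_prop
  · intro s h
    rw [← F1_le hδ h.le, F1_ge h.ge]

noncomputable def D1 (δ s : ℝ) : ℝ :=
  if s ≤ δ then -(2 * s * Real.log s + s) else -2 * s * (Real.log δ + 3/2) + 2*δ

lemma F1_deriv {δ s : ℝ} (hδ : 0 < δ) (hs : 0 < s) : HasDerivAt (F1 δ) (D1 δ s) s := by
  have hA : HasDerivAt (fun s : ℝ => -(s * (s * Real.log s))) (-(2 * s * Real.log s + s)) s := by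
    have := ((hasDerivAt_id s).mul ((hasDerivAt_id s).mul (Real.hasDerivAt_log hs.ne'))).neg
    refine this.congr_deriv ?_
    simp
    field_simp
    ring
  have hB : HasDerivAt (fun s : ℝ => -s^2 * (Real.log δ + 3/2) + 2*δ*s - (1/2)*δ^2)
      (-2 * s * (Real.log δ + 3/2) + 2*δ) s := by
    have := ((((hasDerivAt_pow 2 s).neg).mul_const (Real.log δ + 3/2)).add
      ((hasDerivAt_id s).const_mul (2*δ))).sub_const ((1/2)*δ^2)
    refine this.congr_deriv ?_
    simp
  rcases lt_trichotomy s δ with h | h | h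
  · rw [D1, if_pos h.le]
    refine hA.congr_of_eventuallyEq ?_
    filter_upwards [Ioo_mem_nhds hs h] with x hx
    exact F1_lt (by rw [abs_of_pos hx.1]; exact hx.2)
  · subst h
    have e : -2 * s * (Real.log s + 3/2) + 2*s = D1 s s := by
      rw [D1, if_pos le_rfl]; ring
    rw [e] at hB
    have e2 : -(2 * s * Real.log s + s) = D1 s s := by
      rw [D1, if_pos le_rfl]
    rw [e2] at hA
    have h1 : HasDerivWithinAt (F1 s) (D1 s s) (Set.Iic s) s := by
      refine hA.hasDerivWithinAt.congr_of_eventuallyEq ?_ (F1_le hs (abs_of_pos hs).le)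
      filter_upwards [self_mem_nhdsWithin, mem_nhdsWithin_of_mem_nhds (Ioi_mem_nhds hs)] with x hx hx0
      exact F1_le hs (by rw [abs_of_pos hx0]; exact hx)
    have h2 : HasDerivWithinAt (F1 s) (D1 s s) (Set.Ici s) s := by
      have key : ∀ x, s ≤ x → F1 s x = -x^2 * (Real.log s + 3/2) + 2*s*x - (1/2)*s^2 := by
        intro x hx
        have h0 : |x| = x := abs_of_pos (hs.trans_le hx)
        rw [F1_ge (by rw [h0]; exact hx), h0]
      exact hB.hasDerivWithinAt.congr (fun x hx => key x hx) (key s le_rfl)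
    have := h1.union h2
    rwa [Set.Iic_union_Ici, hasDerivWithinAt_univ] at this
  · rw [D1, if_neg (not_le.mpr h)]
    refine hB.congr_of_eventuallyEq ?_
    filter_upwards [Ioi_mem_nhds h] with x hx
    have h0 : |x| = x := abs_of_pos (hδ.trans hx)
    rw [F1_ge (by rw [h0]; exact le_of_lt hx), h0]

lemma D1_aux {a b : ℝ} (ha : 0 < a) (hab : a ≤ b) (hb : Real.log b < -(3/2)) :
    -(2 * a * Real.log a + a) ≤ -(2 * b * Real.log b + b) := by
  have hb0 : 0 < b := ha.trans_le hab
  have h1 : Real.log b - Real.log a ≤ b / a - 1 := by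
    rw [← Real.log_div hb0.ne' ha.ne']
    exact Real.log_le_sub_one_of_pos (div_pos hb0 ha)
  have h2 : a * (Real.log b - Real.log a) ≤ b - a := by
    have := mul_le_mul_of_nonneg_left h1 ha.le
    have e : a * (b / a - 1) = b - a := by field_simp
    linarith
  nlinarith [mul_nonneg (sub_nonneg.mpr hab) (sub_nonneg.mpr hb.le)]

lemma D1_mono {δ : ℝ} (hδ : 0 < δ) (hL : Real.log δ < -(3/2)) :
    MonotoneOn (D1 δ) (Set.Ioi 0) := by
  intro a ha b hb hab
  have ha : 0 < a := ha
  unfold D1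
  by_cases h2 : b ≤ δ
  · rw [if_pos h2, if_pos (hab.trans h2)]
    exact D1_aux ha hab ((Real.log_le_log (ha.trans_le hab) h2).trans_lt hL)
  · rw [if_neg h2]
    push Not at h2
    split_ifs with h1
    · have := D1_aux ha h1 hL
      nlinarith
    · nlinarith

lemma D1_nonneg {δ s : ℝ} (hδ : 0 < δ) (hL : Real.log δ < -(3/2)) (hs : 0 < s) :
    0 ≤ D1 δ s := by
  unfold D1
  split_ifs with h
  · have := (Real.log_le_log hs h).trans_lt hL
    nlinarith
  · nlinarith

lemma F1_even (δ s : ℝ) : F1 δ (-s) = F1 δ s := by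
  simp [F1]

lemma F1_convex {δ : ℝ} (hδ : 0 < δ) (hL : Real.log δ < -(3/2)) :
    ConvexOn ℝ Set.univ (F1 δ) := by
  have hc : ConvexOn ℝ (Set.Ici 0) (F1 δ) := by
    refine MonotoneOn.convexOn_of_deriv (convex_Ici 0) (F1_cont hδ).continuousOn ?_ ?_
    · rw [interior_Ici]
      exact fun x hx => (F1_deriv hδ hx).differentiableAt.differentiableWithinAt
    · rw [interior_Ici]
      refine (D1_mono hδ hL).congr ?_
      exact fun x hx => (F1_deriv hδ hx).deriv.symm
  have hm : MonotoneOn (F1 δ) (Set.Ici 0) := by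
    refine monotoneOn_of_deriv_nonneg (convex_Ici 0) (F1_cont hδ).continuousOn ?_ ?_
    · rw [interior_Ici]
      exact fun x hx => (F1_deriv hδ hx).differentiableAt.differentiableWithinAt
    · rw [interior_Ici]
      intro x hx
      rw [(F1_deriv hδ hx).deriv]
      exact D1_nonneg hδ hL hx
  have ea : ∀ s, F1 δ s = F1 δ |s| := by
    intro s
    rcases abs_choice s with h | h <;> rw [h]
    rw [F1_even]
  refine ⟨convex_univ, ?_⟩
  intro x _ y _ a b ha hb hab
  rw [ea, ea x, ea y]
  have h1 : |a • x + b • y| ≤ a • |x| + b • |y| := by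
    simp only [smul_eq_mul]
    refine (abs_add_le _ _).trans ?_
    rw [abs_mul, abs_mul, abs_of_nonneg ha, abs_of_nonneg hb]
  exact (hm (Set.mem_Ici.mpr (abs_nonneg _)) (Set.mem_Ici.mpr ((abs_nonneg _).trans h1)) h1).trans
    (hc.2 (Set.mem_Ici.mpr (abs_nonneg x)) (Set.mem_Ici.mpr (abs_nonneg y)) ha hb hab)

lemma F1_pos {δ s : ℝ} (hδ : 0 < δ) (hL : Real.log δ < -(3/2)) (hs : s ≠ 0) : 0 < F1 δ s := by
  have h0 : 0 < |s| := abs_pos.mpr hs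
  have hsq : 0 < s^2 := by positivity
  rcases lt_or_ge |s| δ with h | h
  · rw [F1_lt h]
    have := (Real.log_le_log h0 h.le).trans_lt hL
    rw [Real.log_abs] at this
    nlinarith
  · rw [F1_ge h]
    have h1 : 0 < s^2 * (-(3/2) - Real.log δ) := mul_pos hsq (by linarith)
    nlinarith

theorem stmt1 (δ : ℝ) (hδ : 0 < δ) (hδ' : δ < Real.exp (-(3/2))) :
    Continuous (F1 δ) ∧
    ConvexOn ℝ Set.univ (F1 δ) ∧
    (∀ s : ℝ, F1 δ (-s) = F1 δ s) ∧
    (∀ s : ℝ, 0 ≤ F1 δ s) ∧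
    (∀ s : ℝ, F1 δ s = 0 ↔ s = 0) ∧
    Tendsto (fun t : ℝ => F1 δ t / t) (𝓝[≠] 0) (𝓝 0) ∧
    Tendsto (fun t : ℝ => F1 δ t / t) atTop atTop := by
  have hL : Real.log δ < -(3/2) := (Real.log_lt_iff_lt_exp hδ).mpr hδ'
  have z : F1 δ 0 = 0 := by rw [F1_lt (by simpa using hδ)]; simp
  refine ⟨F1_cont hδ, F1_convex hδ hL, F1_even δ, ?_, ?_, ?_, ?_⟩
  · intro s
    by_cases hs : s = 0
    · rw [hs, z]
    · exact (F1_pos hδ hL hs).le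
  · intro s
    constructor
    · intro h
      by_contra hs
      exact (F1_pos hδ hL hs).ne' h
    · rintro rfl
      exact z
  · have h : Tendsto (fun t : ℝ => -(t * Real.log t)) (𝓝[≠] 0) (𝓝 0) := by
      have := (Real.continuous_mul_log.neg.tendsto 0).mono_left (nhdsWithin_le_nhds (s := {0}ᶜ))
      simp only [Pi.neg_apply, zero_mul, neg_zero] at this
      exact this
    refine h.congr' ?_
    filter_upwards [self_mem_nhdsWithin,
      mem_nhdsWithin_of_mem_nhds (Metric.ball_mem_nhds (0:ℝ) hδ)] with t ht ht2
    have ht : t ≠ 0 := ht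
    rw [F1_lt (by simpa using ht2)]
    field_simp
  · have h : Tendsto (fun t : ℝ => (-(3/2) - Real.log δ) * t) atTop atTop :=
      tendsto_id.const_mul_atTop (by linarith)
    refine tendsto_atTop_mono' _ ?_ h
    filter_upwards [eventually_ge_atTop δ] with t ht
    have ht0 : 0 < t := hδ.trans_le ht
    have h0 : |t| = t := abs_of_pos ht0
    rw [F1_ge (by rw [h0]; exact ht), h0, le_div_iff₀ ht0]
    nlinarith
end

section
/- For every δ with 0 < δ < e^{-3/2}, one has F₁'(s)·s / F₁(s) > 1 for every s > 0, and F₁'(s)·s / F₁(s) → 2 as s → +∞, where F₁' denotes the derivative of F₁. -/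
open Filter Topology

lemma F1_right (δ s : ℝ) (hδ : 0 < δ) (h : δ ≤ s) :
    F1 δ s = -(1/2) * s^2 * (Real.log (δ^2) + 3) + 2*δ*s - (1/2)*δ^2 := by
  have h0 : |s| = s := abs_of_pos (by linarith)
  simp only [F1, h0, if_neg (not_lt.mpr h)]

lemma F1_left (δ s : ℝ) (hs : 0 < s) (h : s ≤ δ) :
    F1 δ s = -(1/2) * s^2 * Real.log (s^2) := by
  rcases h.lt_or_eq with h | h
  · have h0 : |s| = s := abs_of_pos hs
    simp only [F1, h0, if_pos h]
  · subst h
    rw [F1_right s s hs le_rfl]; ring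

lemma polyD (δ s : ℝ) :
    HasDerivAt (fun s : ℝ => -(1/2) * s^2 * (Real.log (δ^2) + 3) + 2*δ*s - (1/2)*δ^2)
      (-(Real.log (δ^2) + 3) * s + 2*δ) s := by
  have h1 := ((((hasDerivAt_pow 2 s).const_mul (-(1/2))).mul_const (Real.log (δ^2) + 3)).add
    ((hasDerivAt_id s).const_mul (2*δ))).sub_const ((1/2)*δ^2)
  refine h1.congr_deriv ?_
  norm_num; ring

lemma logD (s : ℝ) (hs : 0 < s) :
    HasDerivAt (fun s : ℝ => -(1/2) * s^2 * Real.log (s^2))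
      (-(Real.log (s^2) + 1) * s) s := by
  have h1 := ((hasDerivAt_pow 2 s).const_mul (-(1/2))).mul
    ((hasDerivAt_pow 2 s).log (by positivity))
  refine h1.congr_deriv ?_
  field_simp
  norm_num; ring

lemma F1_deriv_right (δ s : ℝ) (hδ : 0 < δ) (h : δ ≤ s) :
    deriv (F1 δ) s = -(Real.log (δ^2) + 3) * s + 2*δ := by
  apply HasDerivAt.deriv
  rcases h.lt_or_eq with h | h
  · refine (polyD δ s).congr_of_eventuallyEq ?_
    filter_upwards [lt_mem_nhds h] with x hx
    exact F1_right δ x hδ hx.le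
  · subst h
    have hr : HasDerivWithinAt (F1 δ) (-(Real.log (δ^2) + 3) * δ + 2*δ) (Set.Ici δ) δ :=
      (polyD δ δ).hasDerivWithinAt.congr (fun x hx => F1_right δ x hδ hx) (F1_right δ δ hδ le_rfl)
    have hl : HasDerivWithinAt (F1 δ) (-(Real.log (δ^2) + 3) * δ + 2*δ) (Set.Ioc 0 δ) δ :=
      ((logD δ hδ).hasDerivWithinAt.congr (fun x hx => F1_left δ x hx.1 hx.2)
        (F1_left δ δ hδ le_rfl)).congr_deriv (by ring)
    refine (hl.union hr).hasDerivAt ?_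
    filter_upwards [lt_mem_nhds hδ] with x hx
    rcases le_total x δ with h | h
    · exact Or.inl ⟨hx, h⟩
    · exact Or.inr h

lemma F1_deriv_left (δ s : ℝ) (hs : 0 < s) (h : s < δ) :
    deriv (F1 δ) s = -(Real.log (s^2) + 1) * s := by
  apply HasDerivAt.deriv
  refine (logD s hs).congr_of_eventuallyEq ?_
  filter_upwards [lt_mem_nhds hs, gt_mem_nhds h] with x hx hx'
  exact F1_left δ x hx hx'.le

lemma log_bd (s : ℝ) (hs : 0 < s) (h : s < Real.exp (-(3/2))) : Real.log (s^2) < -3 := by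
  have := (Real.log_lt_iff_lt_exp hs).mpr h
  rw [Real.log_pow]; push_cast; linarith

theorem stmt5 (δ : ℝ) (hδ : 0 < δ) (hδ' : δ < Real.exp (-(3/2))) :
    (∀ s : ℝ, 0 < s → 1 < deriv (F1 δ) s * s / F1 δ s) ∧
    Tendsto (fun s : ℝ => deriv (F1 δ) s * s / F1 δ s) atTop (𝓝 2) := by
  have hL := log_bd δ hδ hδ'
  constructor
  · intro s hs
    rcases lt_or_ge s δ with h | h
    · have hl := log_bd s hs (h.trans hδ')
      rw [F1_deriv_left δ s hs h, F1_left δ s hs h.le]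
      generalize Real.log (s^2) = l at *
      have h2 : 0 < s^2 := by positivity
      rw [one_lt_div (by nlinarith)]
      nlinarith
    · rw [F1_deriv_right δ s hδ h, F1_right δ s hδ h]
      generalize Real.log (δ^2) = l at *
      have h2 : 0 < s^2 * (-(l+3)) := mul_pos (by positivity) (by linarith)
      have h3 : δ * δ ≤ δ * s := by gcongr
      have h4 : 0 < δ * δ := by positivity
      rw [one_lt_div (by nlinarith)]
      nlinarith
  · generalize hl : Real.log (δ^2) = l at *
    have hi := tendsto_inv_atTop_zero (𝕜 := ℝ)
    have ht : Tendsto (fun s : ℝ => (-(l+3) + 2*δ*s⁻¹) / (-(1/2)*(l+3) + 2*δ*s⁻¹ - (1/2)*δ^2*(s⁻¹)^2))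
        atTop (𝓝 ((-(l+3) + 2*δ*0) / (-(1/2)*(l+3) + 2*δ*0 - (1/2)*δ^2*0^2))) := by
      refine ((hi.const_mul _).const_add _).div
        (((hi.const_mul _).const_add _).sub ((hi.pow 2).const_mul _)) ?_
      intro h
      linarith
    have he : (-(l+3) + 2*δ*0) / (-(1/2)*(l+3) + 2*δ*0 - (1/2)*δ^2*0^2) = 2 := by
      rw [div_eq_iff (by intro h; linarith)]; ring
    rw [he] at ht
    refine ht.congr' ?_
    filter_upwards [eventually_ge_atTop δ] with s h
    have hs : s ≠ 0 := by linarith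
    rw [F1_deriv_right δ s hδ h, F1_right δ s hδ h, hl, ← mul_div_mul_right _ _ (pow_ne_zero 2 hs)]
    congr 1 <;> field_simp
end

section
/- For every δ with 0 < δ < e^{-3/2}, the function F₁ satisfies the Δ₂-condition with constant 4: F₁(2t) ≤ 4·F₁(t) for every t ∈ ℝ. -/
theorem stmt6 (δ : ℝ) (hδ : 0 < δ) (hδ' : δ < Real.exp (-(3/2))) (t : ℝ) :
    F1 δ (2*t) ≤ 4 * F1 δ t := by
  have h2 : |2*t| = 2*|t| := by rw [abs_mul]; norm_num
  have hsq : t^2 = |t|^2 := (sq_abs t).symm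
  have hu : 0 ≤ |t| := abs_nonneg t
  unfold F1
  rw [h2, mul_pow, hsq]
  generalize |t| = u at *
  by_cases h1 : 2*u < δ
  · have h3 : u < δ := by linarith
    rw [if_pos h1, if_pos h3]
    rcases hu.eq_or_lt with h0 | h0
    · subst h0; simp
    · have hl : Real.log (u^2) ≤ Real.log (2^2*u^2) :=
        Real.log_le_log (by positivity) (by nlinarith [sq_nonneg u])
      generalize Real.log (2^2*u^2) = a at *
      generalize Real.log (u^2) = b at *
      nlinarith [mul_le_mul_of_nonneg_left hl (sq_nonneg u)]
  · rw [if_neg h1]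
    by_cases h3 : u < δ
    · rw [if_pos h3]
      have h0 : 0 < u := by linarith
      have hl : Real.log (u^2) ≤ Real.log (δ^2) :=
        Real.log_le_log (by positivity) (by nlinarith)
      have h4 : 0 ≤ (2*u-δ)*(6*u-δ) := mul_nonneg (by linarith) (by linarith)
      nlinarith [mul_le_mul_of_nonneg_left hl (sq_nonneg u)]
    · rw [if_neg h3]
      nlinarith [mul_le_mul_of_nonneg_left (not_lt.mp h3) hδ.le, sq_nonneg δ]
end

section
/- For every δ with 0 < δ < e^{-3/2}, the conjugate N-function F̃₁ of F₁, defined by F̃₁(s) = sup{ s·t - F₁(t) : t ≥ 0 } for s ≥ 0, is finite for every s ≥ 0 and satisfies the Δ₂-condition: there exists a constant k > 0 such that F̃₁(2s) ≤ k·F̃₁(s) for every s ≥ 0. -/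
/-- The conjugate N-function (Legendre transform) of `F1 δ`. -/
noncomputable def F1conj (δ s : ℝ) : ℝ :=
  sSup ((fun t => s * t - F1 δ t) '' Set.Ici 0)

lemma F1_lo {δ t : ℝ} (ht : 0 ≤ t) (h : t < δ) : F1 δ t = t^2 * (-Real.log t) := by
  unfold F1
  rw [abs_of_nonneg ht, if_pos h, Real.log_pow]
  push_cast; ring

lemma F1_hi {δ t : ℝ} (ht : 0 ≤ t) (h : δ ≤ t) :
    F1 δ t = (-Real.log δ - 3/2) * t^2 + 2*δ*t - δ^2/2 := by
  unfold F1
  rw [abs_of_nonneg ht, if_neg (not_lt.mpr h), Real.log_pow]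
  push_cast; ring

lemma log_le_half {x : ℝ} (hx : 0 < x) : Real.log x ≤ x / 2 := by
  have h := Real.log_le_sub_one_of_pos (x := x/2) (by positivity)
  rw [Real.log_div hx.ne' (by norm_num)] at h
  have h2 := Real.log_two_lt_d9
  linarith

lemma F1_key {δ a l u : ℝ} (hδ : 0 < δ) (ha : a = -Real.log δ - 3/2) (ha0 : 0 < a)
    (hl : l * a = 2 * a + 3) (hu : 0 ≤ u) : 2 * l * F1 δ u ≤ F1 δ (l * u) := by
  have hl2 : 2 < l := by nlinarith
  have hl0 : 0 < l := by linarith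
  have hlu : 0 ≤ l * u := by positivity
  have hle : u ≤ l * u := by nlinarith
  rcases hu.eq_or_lt with rfl | hu0
  · simp [F1, hδ]
  by_cases h1 : δ ≤ u
  · rw [F1_hi hu h1, F1_hi hlu (h1.trans hle), ← ha]
    have e : a * (l*u)^2 + 2*δ*(l*u) - δ^2/2 - 2*l*(a*u^2+2*δ*u-δ^2/2)
        = l*u*((l*a-2*a)*u - 2*δ) + (l-1/2)*δ^2 := by ring
    have : 0 ≤ l*u*((l*a-2*a)*u - 2*δ) := mul_nonneg hlu (by rw [hl]; linarith)
    have : 0 ≤ (l-1/2)*δ^2 := mul_nonneg (by linarith) (by positivity)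
    linarith
  push Not at h1
  rw [F1_lo hu h1]
  by_cases h2 : δ ≤ l * u
  · rw [F1_hi hlu h2, ← ha]
    have h3 := log_le_half (div_pos hδ hu0)
    rw [Real.log_div hδ.ne' hu0.ne'] at h3
    have h4 : u * (-Real.log u) ≤ u * (a + 3/2) + δ / 2 := by
      have : u * (-Real.log u) ≤ u * (a + 3/2 + δ / u / 2) :=
        mul_le_mul_of_nonneg_left (by linarith) hu
      have e : u * (a + 3/2 + δ / u / 2) = u * (a + 3/2) + δ / 2 := by field_simp
      linarith
    have h5 := mul_le_mul_of_nonneg_left h4 (by positivity : 0 ≤ 2 * l * u)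
    have e : a * (l*u)^2 = l * u^2 * (l*a) := by ring
    rw [e, hl]
    nlinarith [mul_le_mul_of_nonneg_left h2 hδ.le, sq_nonneg δ]
  · push Not at h2
    rw [F1_lo hlu h2, Real.log_mul hl0.ne' hu0.ne']
    have h3 := Real.log_lt_log (by positivity) h2
    rw [Real.log_mul hl0.ne' hu0.ne'] at h3
    have h4 := log_le_half hl0
    have h5 : 0 ≤ (l-2) * (-Real.log u - (a + 3/2) - Real.log l) :=
      mul_nonneg (by linarith) (by linarith)
    have h6 : 0 ≤ l * (-Real.log l - Real.log u) - 2 * (-Real.log u) := by nlinarith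
    have h7 := mul_nonneg (by positivity : 0 ≤ l * u^2) h6
    nlinarith

theorem stmt7 (δ : ℝ) (hδ : 0 < δ) (hδ' : δ < Real.exp (-(3/2))) :
    (∀ s : ℝ, 0 ≤ s → BddAbove ((fun t => s * t - F1 δ t) '' Set.Ici 0)) ∧
    ∃ k : ℝ, 0 < k ∧ ∀ s : ℝ, 0 ≤ s → F1conj δ (2*s) ≤ k * F1conj δ s := by
  obtain ⟨a, ha⟩ : ∃ a, a = -Real.log δ - 3/2 := ⟨_, rfl⟩
  have hlog : Real.log δ < -(3/2) := (Real.log_lt_iff_lt_exp hδ).2 hδ'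
  have ha0 : 0 < a := by linarith
  have hB : ∀ s : ℝ, 0 ≤ s → BddAbove ((fun t => s * t - F1 δ t) '' Set.Ici 0) := by
    intro s hs
    refine ⟨s * δ + s^2/(4*a), ?_⟩
    rintro _ ⟨t, ht, rfl⟩
    have ht : 0 ≤ t := ht
    have hp : 0 ≤ s^2/(4*a) := by positivity
    have hq : 0 ≤ s * δ := by positivity
    by_cases h : t < δ
    · simp only [F1_lo ht h]
      have h1 : δ < 1 := hδ'.trans (by rw [Real.exp_lt_one_iff]; norm_num)
      have h2 := Real.log_nonpos ht (h.trans h1).le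
      have h3 : 0 ≤ t^2 * (-Real.log t) := mul_nonneg (by positivity) (by linarith)
      nlinarith
    · push Not at h
      simp only [F1_hi ht h, ← ha]
      have e : s^2/(4*a) - s*t + a*t^2 = (s - 2*a*t)^2/(4*a) := by field_simp; ring
      have : 0 ≤ (s - 2*a*t)^2/(4*a) := by positivity
      nlinarith
  refine ⟨hB, ?_⟩
  obtain ⟨l, hl⟩ : ∃ l, l = 2 + 3 / a := ⟨_, rfl⟩
  have hla : l * a = 2 * a + 3 := by rw [hl]; field_simp
  have hl0 : 0 < l := by rw [hl]; positivity
  refine ⟨2 * l, by positivity, fun s hs => ?_⟩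
  unfold F1conj
  refine csSup_le (Set.Nonempty.image _ ⟨0, Set.self_mem_Ici⟩) ?_
  rintro _ ⟨t, ht, rfl⟩
  have ht : 0 ≤ t := ht
  have hu : 0 ≤ t / l := by positivity
  have h1 := le_csSup (hB s hs) ⟨t / l, hu, rfl⟩
  have h2 := F1_key hδ ha ha0 hla hu
  have e : l * (t / l) = t := by field_simp
  rw [e] at h2
  have h3 := mul_le_mul_of_nonneg_left h1 (by positivity : 0 ≤ 2 * l)
  refine le_trans ?_ h3
  have e2 : 2 * l * (s * (t / l) - F1 δ (t / l)) = 2 * s * t - 2 * l * F1 δ (t / l) := by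
    field_simp
  simp only [e2]
  linarith
end

section
/- For every δ > 0, the derivatives of F₁ and F₂ satisfy F₂'(s) - F₁'(s) = s·log(s²) + s for every s ≠ 0, and F₂'(0) = F₁'(0) = 0. -/
noncomputable def F2 (δ s : ℝ) : ℝ :=
  if |s| ≤ δ then 0
  else (1/2) * s^2 * Real.log (s^2/δ^2) + 2*δ*|s| - (3/2)*s^2 - (1/2)*δ^2

lemma F2_sub_aux (δ : ℝ) (hδ : 0 < δ) (s : ℝ) : F1 δ s = F2 δ s - s * (s * Real.log s) := by
  unfold F1 F2
  have hl : Real.log (s^2) = 2 * Real.log s := by rw [Real.log_pow]; norm_num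
  have hd : Real.log (δ^2) = 2 * Real.log δ := by rw [Real.log_pow]; norm_num
  rcases lt_trichotomy (|s|) δ with h | h | h
  · rw [if_pos h, if_pos h.le, hl]; ring
  · rw [if_neg h.not_lt, if_pos h.le, hd, ← Real.log_abs s, h, ← sq_abs s, h]
    have : s * (s * Real.log δ) = |s|^2 * Real.log δ := by rw [sq_abs]; ring
    rw [this, h]; ring
  · have hs : s ≠ 0 := by
      intro h0; rw [h0, abs_zero] at h; linarith
    rw [if_neg h.le.not_gt, if_neg h.not_ge, Real.log_div (by positivity) (by positivity), hl, hd]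
    ring

lemma g_deriv_zero : HasDerivAt (fun s : ℝ => s * (s * Real.log s)) 0 0 := by
  rw [hasDerivAt_iff_tendsto_slope]
  have h : Filter.Tendsto (fun s : ℝ => s * Real.log s) (nhdsWithin 0 {0}ᶜ) (nhds 0) := by
    have := Real.continuous_mul_log.tendsto 0
    simp only [zero_mul] at this
    exact this.mono_left nhdsWithin_le_nhds
  refine h.congr' ?_
  filter_upwards [self_mem_nhdsWithin] with s hs
  have hs : s ≠ 0 := hs
  simp [slope_def_field]
  field_simp

lemma g_deriv (s : ℝ) (hs : s ≠ 0) :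
    HasDerivAt (fun s : ℝ => s * (s * Real.log s)) (s * Real.log (s^2) + s) s := by
  have h := (hasDerivAt_id s).mul ((hasDerivAt_id s).mul (Real.hasDerivAt_log hs))
  refine h.congr_deriv ?_
  have hl : Real.log (s^2) = 2 * Real.log s := by rw [Real.log_pow]; norm_num
  rw [hl]
  simp
  field_simp
  ring

lemma G_deriv (δ : ℝ) (hδ : 0 < δ) (s : ℝ) (hs : s ≠ 0) :
    HasDerivAt (fun s : ℝ => (1/2) * s^2 * Real.log (s^2/δ^2) + 2*δ*|s| - (3/2)*s^2 - (1/2)*δ^2)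
      (s * Real.log (s^2/δ^2) + s + 2 * δ * (SignType.sign s : ℝ) - 3 * s) s := by
  have h2 : HasDerivAt (fun s : ℝ => s^2) (2 * s) s := by simpa using hasDerivAt_pow 2 s
  have hl := (h2.div_const (δ^2)).log (by positivity)
  have h := ((((h2.const_mul (1/2)).mul hl).add ((hasDerivAt_abs hs).const_mul (2*δ))).sub
    (h2.const_mul (3/2))).sub_const ((1/2)*δ^2)
  refine h.congr_deriv ?_
  field_simp

lemma F2_deriv_zero (δ s : ℝ) (h : |s| < δ) : HasDerivAt (F2 δ) 0 s := by
  refine (hasDerivAt_const s (0:ℝ)).congr_of_eventuallyEq ?_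
  filter_upwards [continuous_abs.continuousAt.eventually_lt_const h] with t ht
  simp [F2, ht.le]

lemma F2_diff (δ : ℝ) (hδ : 0 < δ) (s : ℝ) : DifferentiableAt ℝ (F2 δ) s := by
  rcases lt_trichotomy (|s|) δ with h | h | h
  · exact (F2_deriv_zero δ s h).differentiableAt
  · have hs : s ≠ 0 := by
      intro h0; rw [h0, abs_zero] at h; linarith
    have hG := G_deriv δ hδ s hs
    have hq : s^2/δ^2 = 1 := by rw [← sq_abs, h]; field_simp
    have h0 : s * Real.log (s^2/δ^2) + s + 2 * δ * (SignType.sign s : ℝ) - 3 * s = 0 := by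
      have := abs_mul_sign s
      rw [h] at this
      rw [hq, Real.log_one]
      linarith
    rw [h0] at hG
    refine HasDerivAt.differentiableAt (f' := 0) ?_
    rw [hasDerivAt_iff_isLittleO] at hG ⊢
    refine Asymptotics.IsBigO.trans_isLittleO (Asymptotics.IsBigO.of_bound 1 ?_) hG
    filter_upwards with t
    have e : (1/2) * s^2 * Real.log (s^2/δ^2) + 2*δ*|s| - (3/2)*s^2 - (1/2)*δ^2 = 0 := by
      rw [hq, Real.log_one, ← sq_abs, h]; ring
    have e2 : F2 δ s = 0 := by simp [F2, h]
    simp only [e, e2, one_mul, smul_zero, sub_zero]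
    unfold F2
    split_ifs
    · rw [norm_zero]; exact norm_nonneg _
    · exact le_rfl
  · have hs : s ≠ 0 := by
      intro h0; rw [h0, abs_zero] at h; linarith
    refine ((G_deriv δ hδ s hs).congr_of_eventuallyEq ?_).differentiableAt
    filter_upwards [continuous_abs.continuousAt.eventually_const_lt h] with t ht
    simp only [F2, if_neg ht.not_ge]

theorem stmt14 (δ : ℝ) (hδ : 0 < δ) :
    (∀ s : ℝ, s ≠ 0 →
      deriv (F2 δ) s - deriv (F1 δ) s = s * Real.log (s^2) + s) ∧
    deriv (F2 δ) 0 = 0 ∧ deriv (F1 δ) 0 = 0 := by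
  have hF : F1 δ = fun s => F2 δ s - s * (s * Real.log s) := funext (F2_sub_aux δ hδ)
  have h0 := F2_deriv_zero δ 0 (by simpa using hδ)
  refine ⟨fun s hs => ?_, h0.deriv, ?_⟩
  · have h := (F2_diff δ hδ s).hasDerivAt.sub (g_deriv s hs)
    have h' : deriv (F1 δ) s = deriv (F2 δ) s - (s * Real.log (s^2) + s) := by rw [hF]; exact h.deriv
    rw [h']; ring
  · have h' : deriv (F1 δ) 0 = 0 - 0 := by rw [hF]; exact (h0.sub g_deriv_zero).deriv
    rw [h']; ring
end

section
/- Let N ≥ 1 be an integer and define f : ℝ^N → ℝ by f(x) = 1/(‖x‖^{N/2}·log‖x‖) if ‖x‖ ≥ 3 and f(x) = 0 otherwise. Then f is square-integrable on ℝ^N (with respect to Lebesgue measure), while the function x ↦ f(x)²·log(f(x)²) (with the convention s²·log(s²) = 0 at s = 0) is not integrable; indeed ∫_{‖x‖ ≥ 3} f(x)²·|log(f(x)²)| dx = +∞ and the integral ∫_{ℝ^N} f(x)²·log(f(x)²) dx diverges to -∞. -/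
open MeasureTheory

lemma aux_log {y : ℝ} (hy : 3 ≤ y) : 1 < Real.log y := by
  rw [Real.lt_log_iff_exp_lt (by linarith)]
  linarith [Real.exp_one_lt_d9]

lemma aux_sq (N : ℕ) {y : ℝ} (hy : 3 ≤ y) :
    (1 / (y ^ ((N : ℝ) / 2) * Real.log y)) ^ 2 = 1 / (y ^ N * Real.log y ^ 2) := by
  have : (y ^ ((N : ℝ) / 2)) ^ 2 = y ^ N := by
    rw [← Real.rpow_natCast, ← Real.rpow_mul (by linarith)]
    simp
  rw [div_pow, mul_pow, this, one_pow]

lemma aux_loglog (N : ℕ) (hN : 1 ≤ N) {y : ℝ} (hy : 3 ≤ y) :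
    Real.log (1 / (y ^ N * Real.log y ^ 2)) ≤ - Real.log y := by
  have h1 := aux_log hy
  have h2 : 0 < y := by linarith
  rw [one_div, Real.log_inv, Real.log_mul (by positivity) (by positivity), Real.log_pow,
    Real.log_pow]
  have h3 : 0 < Real.log (Real.log y) := Real.log_pos h1
  have h4 : (1 : ℝ) ≤ N := by exact_mod_cast hN
  push_cast
  nlinarith

lemma aux_int : IntegrableOn (fun y : ℝ => 1 / (y * Real.log y ^ 2)) (Set.Ioi 3) := by
  have hd : ∀ x : ℝ, 3 ≤ x →
      HasDerivAt (fun y => -(Real.log y)⁻¹) (1 / (x * Real.log x ^ 2)) x := by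
    intro x hx
    have h1 := aux_log hx
    have := ((Real.hasDerivAt_log (by linarith : x ≠ 0)).inv (by linarith)).neg
    have he : 1 / (x * Real.log x ^ 2) = -(-x⁻¹ / Real.log x ^ 2) := by
      rw [neg_div, neg_neg, one_div, mul_inv, div_eq_mul_inv]
    rw [he]
    exact this
  refine integrableOn_Ioi_deriv_of_nonneg (g := fun y => -(Real.log y)⁻¹) (l := -0)
    (hd 3 le_rfl).continuousAt.continuousWithinAt (fun x hx => hd x (le_of_lt hx)) ?_ ?_
  · intro x hx
    have : (3 : ℝ) < x := hx
    have : 0 < x := by linarith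
    positivity
  · exact (Real.tendsto_log_atTop.inv_tendsto_atTop).neg

theorem stmt18 (N : ℕ) (hN : 1 ≤ N) (f : EuclideanSpace ℝ (Fin N) → ℝ)
    (hf : ∀ x, f x =
      if 3 ≤ ‖x‖ then 1 / (‖x‖ ^ ((N : ℝ) / 2) * Real.log ‖x‖) else 0) :
    Integrable (fun x => f x ^ 2) ∧
    ¬ Integrable (fun x => f x ^ 2 * Real.log (f x ^ 2)) ∧
    (∫⁻ x in {x : EuclideanSpace ℝ (Fin N) | 3 ≤ ‖x‖},
        ENNReal.ofReal (f x ^ 2 * |Real.log (f x ^ 2)|)) = ⊤ ∧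
    (∫⁻ x, ENNReal.ofReal (-(f x ^ 2 * Real.log (f x ^ 2)))) = ⊤ := by
  have : Nonempty (Fin N) := ⟨⟨0, hN⟩⟩
  obtain ⟨h, hh⟩ : ∃ h : ℝ → ℝ, h = fun y =>
    if 3 ≤ y then 1 / (y ^ N * Real.log y ^ 2) else 0 := ⟨_, rfl⟩
  have h3 : ∀ y, 3 ≤ y → h y = 1 / (y ^ N * Real.log y ^ 2) := fun y hy => by
    rw [hh]; exact if_pos hy
  have h0 : ∀ y, ¬ 3 ≤ y → h y = 0 := fun y hy => by
    rw [hh]; exact if_neg hy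
  have hfh : ∀ x, f x ^ 2 = h ‖x‖ := by
    intro x
    rw [hf x]
    by_cases hx : 3 ≤ ‖x‖
    · rw [if_pos hx, aux_sq N hx, h3 _ hx]
    · rw [if_neg hx, h0 _ hx]; simp
  have hpos : ∀ y, 0 ≤ h y := by
    intro y
    by_cases hy : 3 ≤ y
    · have : 0 < y := by linarith
      rw [h3 y hy]; positivity
    · rw [h0 y hy]
  have hneg : ∀ y, h y * Real.log (h y) ≤ 0 := by
    intro y
    by_cases hy : 3 ≤ y
    · refine mul_nonpos_of_nonneg_of_nonpos (hpos y) ?_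
      rw [h3 y hy]
      linarith [aux_loglog N hN hy, aux_log hy]
    · rw [h0 y hy]; simp
  have hmeas : Measurable h := by
    rw [hh]
    exact Measurable.ite measurableSet_Ici (by fun_prop) measurable_const
  have hpow : ∀ y : ℝ, y ^ N = y ^ (N - 1) * y := fun y => by
    rw [← pow_succ, Nat.sub_add_cancel hN]
  simp only [hfh]
  have hnot : ¬ Integrable (fun x : EuclideanSpace ℝ (Fin N) => h ‖x‖ * Real.log (h ‖x‖)) := by
    rw [integrable_fun_norm_addHaar volume (f := fun y => h y * Real.log (h y))]
    have hd : ∀ x : ℝ, 3 ≤ x →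
        HasDerivAt (fun y => Real.log (Real.log y)) (x⁻¹ / Real.log x) x := by
      intro x hx
      have h1 := aux_log hx
      exact (Real.hasDerivAt_log (by linarith : x ≠ 0)).log (by linarith)
    refine not_integrableOn_of_tendsto_norm_atTop_of_deriv_isBigO_filter
      (f := fun y => Real.log (Real.log y)) Filter.atTop (Filter.Ioi_mem_atTop 0) ?_ ?_ ?_
    · filter_upwards [Filter.eventually_ge_atTop 3] with x hx using (hd x hx).differentiableAt
    · exact tendsto_norm_atTop_atTop.comp
        (Real.tendsto_log_atTop.comp Real.tendsto_log_atTop)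
    · refine Asymptotics.IsBigO.of_bound 1 ?_
      filter_upwards [Filter.eventually_ge_atTop 3] with x hx
      have h1 := aux_log hx
      have hx0 : 0 < x := by linarith
      have h2 := aux_loglog N hN hx
      rw [(hd x hx).deriv, h3 x hx, one_mul, finrank_euclideanSpace, Fintype.card_fin,
        Real.norm_of_nonneg (by positivity), smul_eq_mul, ← mul_assoc, norm_mul,
        Real.norm_of_nonneg (by positivity), Real.norm_of_nonpos (by linarith)]
      calc x⁻¹ / Real.log x = x ^ (N - 1) * (1 / (x ^ N * Real.log x ^ 2)) * Real.log x := by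
            rw [hpow]; field_simp
        _ ≤ _ := by
            refine mul_le_mul_of_nonneg_left (by linarith) (by positivity)
  have htop : (∫⁻ x : EuclideanSpace ℝ (Fin N),
      ENNReal.ofReal (-(h ‖x‖ * Real.log (h ‖x‖)))) = ⊤ := by
    by_contra hne
    apply hnot
    rw [← integrable_neg_iff]
    refine ⟨?_, ?_⟩
    · have hm : Measurable fun x : EuclideanSpace ℝ (Fin N) => h ‖x‖ := hmeas.comp measurable_norm
      exact (hm.mul (Real.measurable_log.comp hm)).neg.aestronglyMeasurable
    rw [hasFiniteIntegral_iff_ofReal]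
    · exact lt_top_iff_ne_top.2 hne
    · exact Filter.Eventually.of_forall fun x => neg_nonneg.2 (hneg ‖x‖)
  refine ⟨?_, hnot, ?_, htop⟩
  · rw [integrable_fun_norm_addHaar volume (f := h)]
    have h1 : IntegrableOn (fun y : ℝ => 1 / (y * Real.log y ^ 2)) (Set.Ici 3) :=
      by
      rw [integrableOn_Ici_iff_integrableOn_Ioi]; exact aux_int
    refine ((integrable_indicator_iff measurableSet_Ici).2 h1).integrableOn.congr_fun ?_
      measurableSet_Ioi
    intro y hy
    have hy0 : 0 < y := hy
    simp only [finrank_euclideanSpace, Fintype.card_fin, smul_eq_mul]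
    by_cases h3y : 3 ≤ y
    · have := aux_log h3y
      rw [Set.indicator_of_mem (show y ∈ Set.Ici (3 : ℝ) from h3y), h3 y h3y, hpow]
      field_simp
    · rw [Set.indicator_of_notMem (show y ∉ Set.Ici (3 : ℝ) from h3y), h0 y h3y, mul_zero]
  · rw [← htop, ← lintegral_indicator (measurableSet_le measurable_const measurable_norm)]
    refine lintegral_congr fun x => ?_
    by_cases hx : 3 ≤ ‖x‖
    · rw [Set.indicator_of_mem (show x ∈ {x | 3 ≤ ‖x‖} from hx), abs_of_nonpos, mul_neg]
      rw [h3 _ hx]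
      linarith [aux_loglog N hN hx, aux_log hx]
    · rw [Set.indicator_of_notMem (show x ∉ {x | 3 ≤ ‖x‖} from hx), h0 _ hx]; simp
end

section
/- Let N ≥ 1, μ ∈ ℝ, and let φ : ℝ^N → ℝ be a smooth, compactly supported function that is not identically zero. Then the function t ↦ (t²/2)·∫_{ℝ^N} (‖∇φ(x)‖² + (μ+1)·φ(x)²) dx - (1/2)·∫_{ℝ^N} (t·φ(x))²·log((t·φ(x))²) dx tends to -∞ as t → +∞. In particular, for every fixed μ the values of this expression become smaller than -1 for all sufficiently large t. -/
open MeasureTheory Filter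

theorem stmt19 (N : ℕ) (hN : 1 ≤ N) (μ : ℝ) (φ : EuclideanSpace ℝ (Fin N) → ℝ)
    (hsmooth : ContDiff ℝ (⊤ : ℕ∞) φ) (hsupp : HasCompactSupport φ) (hne : φ ≠ 0) :
    Tendsto (fun t : ℝ =>
        (t ^ 2 / 2) * (∫ x, (‖gradient φ x‖ ^ 2 + (μ + 1) * φ x ^ 2))
          - (1 / 2) * (∫ x, (t * φ x) ^ 2 * Real.log ((t * φ x) ^ 2)))
      atTop atBot ∧
    ∃ T : ℝ, ∀ t : ℝ, T ≤ t →
      (t ^ 2 / 2) * (∫ x, (‖gradient φ x‖ ^ 2 + (μ + 1) * φ x ^ 2))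
        - (1 / 2) * (∫ x, (t * φ x) ^ 2 * Real.log ((t * φ x) ^ 2)) < -1 := by
  have hc : Continuous φ := hsmooth.continuous
  have hc2 : Continuous (fun x => φ x ^ 2) := hc.pow 2
  have hs2 : HasCompactSupport (fun x => φ x ^ 2) :=
    hsupp.comp_left (g := fun y : ℝ => y ^ 2) (by simp)
  have hi2 : Integrable (fun x => φ x ^ 2) := hc2.integrable_of_hasCompactSupport hs2
  have hcl : Continuous (fun x => φ x ^ 2 * Real.log (φ x ^ 2)) :=
    Real.continuous_mul_log.comp hc2
  have hsl : HasCompactSupport (fun x => φ x ^ 2 * Real.log (φ x ^ 2)) :=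
    hsupp.comp_left (g := fun y : ℝ => y ^ 2 * Real.log (y ^ 2)) (by simp)
  have hil : Integrable (fun x => φ x ^ 2 * Real.log (φ x ^ 2)) :=
    hcl.integrable_of_hasCompactSupport hsl
  have hB : 0 < ∫ x, φ x ^ 2 := by
    obtain ⟨x0, hx0⟩ := Function.ne_iff.mp hne
    exact hc2.integral_pos_of_hasCompactSupport_nonneg_nonzero hs2 (fun x => sq_nonneg _)
      (x := x0) (pow_ne_zero 2 hx0)
  have key : ∀ t : ℝ, 0 < t → ∫ x, (t * φ x) ^ 2 * Real.log ((t * φ x) ^ 2)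
      = t ^ 2 * (2 * Real.log t) * (∫ x, φ x ^ 2)
        + t ^ 2 * ∫ x, φ x ^ 2 * Real.log (φ x ^ 2) := by
    intro t ht
    rw [← integral_const_mul, ← integral_const_mul,
      ← integral_add (hi2.const_mul _) (hil.const_mul _)]
    congr 1
    ext x
    by_cases hx : φ x = 0
    · simp [hx]
    · rw [mul_pow, Real.log_mul (by positivity) (by positivity), Real.log_pow t 2]
      push_cast
      ring
  have main : Tendsto (fun t : ℝ =>
        (t ^ 2 / 2) * (∫ x, (‖gradient φ x‖ ^ 2 + (μ + 1) * φ x ^ 2))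
          - (1 / 2) * (∫ x, (t * φ x) ^ 2 * Real.log ((t * φ x) ^ 2)))
      atTop atBot := by
    generalize (∫ x, (‖gradient φ x‖ ^ 2 + (μ + 1) * φ x ^ 2)) = A
    generalize (∫ x, φ x ^ 2) = B at hB key
    generalize (∫ x, φ x ^ 2 * Real.log (φ x ^ 2)) = C at key
    have h1 : Tendsto (fun t : ℝ => t ^ 2) atTop atTop := tendsto_pow_atTop two_ne_zero
    have h2 : Tendsto (fun t : ℝ => (A - C) / 2 + (-B) * Real.log t) atTop atBot :=
      tendsto_atBot_add_const_left _ _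
        (Real.tendsto_log_atTop.const_mul_atTop_of_neg (by linarith))
    refine (h1.atTop_mul_atBot₀ h2).congr' ?_
    filter_upwards [eventually_gt_atTop 0] with t ht
    rw [key t ht]
    ring
  exact ⟨main, eventually_atTop.mp (main.eventually_lt_atBot (-1))⟩
end
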